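/- There are uncountably many distinct maximal subgroups of Thompson's group V that arise as stabilizers Stab_V(𝒫) of simple nuclear type systems 𝒫, and moreover none of these subgroups stabilizes setwise any nonempty finite subset of 𝔠. -/

import Mathlib

/-- Addresses: finite words over the alphabet `{0,1}` (`Bool`). -/
abbrev Addr : Type := List Bool

/-- Cantor space: infinite words over the alphabet `{0,1}`. -/
abbrev Cantor : Type := ℕ → Bool

/-- Prepend the finite word `α` to the infinite word `w`. -/
def wcat (α : Addr) (w : Cantor) : Cantor := fun n =>
  if h : n < α.length then α.get ⟨n, h⟩ else w (n - α.length)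

/-- The cone of the address `α`: the set of infinite words having `α` as a prefix. -/
def cone (α : Addr) : Set Cantor := Set.range (wcat α)

/-- `g` is a prefix substitution map: there are partitions of Cantor space into cones
`(A i)𝔠` and `(B i)𝔠` such that `g` maps `(A i) w` to `(B i) w`. -/
def IsPrefixSubst (g : Equiv.Perm Cantor) : Prop :=
  ∃ (n : ℕ) (A B : Fin n → Addr),
    (∀ i j, i ≠ j → Disjoint (cone (A i)) (cone (A j))) ∧
    (⋃ i, cone (A i)) = Set.univ ∧
    (∀ i j, i ≠ j → Disjoint (cone (B i)) (cone (B j))) ∧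
    (⋃ i, cone (B i)) = Set.univ ∧
    (∀ i w, g (wcat (A i) w) = wcat (B i) w)

/-- Thompson's group `V`, as the set of prefix substitution maps inside `Equiv.Perm Cantor`. -/
def VSet : Set (Equiv.Perm Cantor) := { g | IsPrefixSubst g }

/-- `α ^ g = β` : `g` maps the cone of `α` onto the cone of `β` by the prefix
substitution `α ↦ β`. -/
def actsOn (g : Equiv.Perm Cantor) (α β : Addr) : Prop :=
  ∀ w, g (wcat α w) = wcat β w

/-- A subset of `Equiv.Perm Cantor` that is closed under the group operations. -/
def IsSubgroupSet (M : Set (Equiv.Perm Cantor)) : Prop :=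
  (1 : Equiv.Perm Cantor) ∈ M ∧ (∀ g ∈ M, ∀ h ∈ M, g * h ∈ M) ∧ ∀ g ∈ M, g⁻¹ ∈ M

/-- `M` is a maximal subgroup of Thompson's group `V`. -/
def IsMaximalSubgroupOfV (M : Set (Equiv.Perm Cantor)) : Prop :=
  IsSubgroupSet M ∧ M ⊆ VSet ∧ M ≠ VSet ∧
    ∀ H : Set (Equiv.Perm Cantor),
      IsSubgroupSet H → M ⊆ H → H ⊆ VSet → H = M ∨ H = VSet

/-- A relation on addresses is coherent if `α ∼ β` implies `α0 ∼ β0` and `α1 ∼ β1`. -/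
def Coherent (r : Addr → Addr → Prop) : Prop :=
  ∀ α β, r α β → r (α ++ [false]) (β ++ [false]) ∧ r (α ++ [true]) (β ++ [true])

/-- A relation on addresses is reduced if `α0 ∼ β0` and `α1 ∼ β1` imply `α ∼ β`. -/
def Reduced (r : Addr → Addr → Prop) : Prop :=
  ∀ α β, r (α ++ [false]) (β ++ [false]) → r (α ++ [true]) (β ++ [true]) → r α β

/-- A type system: a coherent and reduced equivalence relation on addresses
(identified with the partition of `Ω` into its classes). -/
def IsTypeSystem (r : Addr → Addr → Prop) : Prop :=
  Equivalence r ∧ Coherent r ∧ Reduced r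

/-- `g` fixes the parts of `r`: for all but finitely many addresses `α`, the image
`α ^ g` is defined and equivalent to `α`. -/
def FixesParts (r : Addr → Addr → Prop) (g : Equiv.Perm Cantor) : Prop :=
  { α : Addr | ¬ ∃ β, actsOn g α β ∧ r α β }.Finite

/-- `g` stabilizes `r`: on some cofinite set of addresses, `α ^ g` is defined and `g`
preserves equivalence and inequivalence of addresses. -/
def Stabilizes (r : Addr → Addr → Prop) (g : Equiv.Perm Cantor) : Prop :=
  ∃ Ω₀ : Set Addr, Ω₀ᶜ.Finite ∧ (∀ α ∈ Ω₀, ∃ β, actsOn g α β) ∧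
    ∀ α ∈ Ω₀, ∀ α' ∈ Ω₀, ∀ β β', actsOn g α β → actsOn g α' β' → (r α α' ↔ r β β')

/-- `Fix_V(𝒫)`: the elements of Thompson's group `V` fixing the parts of `r`. -/
def FixSet (r : Addr → Addr → Prop) : Set (Equiv.Perm Cantor) :=
  { g | IsPrefixSubst g ∧ FixesParts r g }

/-- `Stab_V(𝒫)`: the elements of Thompson's group `V` stabilizing `r`. -/
def StabSet (r : Addr → Addr → Prop) : Set (Equiv.Perm Cantor) :=
  { g | IsPrefixSubst g ∧ Stabilizes r g }

/-- The type system of `s` is a quotient of that of `r`. -/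
def IsQuotientOf (s r : Addr → Addr → Prop) : Prop :=
  IsTypeSystem s ∧ ∀ α β, r α β → s α β

/-- A simple type system: the universal relation is a proper quotient, and every
quotient is either the type system itself or the universal one. -/
def SimpleTS (r : Addr → Addr → Prop) : Prop :=
  IsTypeSystem r ∧ (∃ α β : Addr, ¬ r α β) ∧
    ∀ s : Addr → Addr → Prop, IsQuotientOf s r →
      (∀ α β, s α β ↔ r α β) ∨ ∀ α β, s α β

/-- The type (equivalence class) of the address `α`. -/
def typeOf (r : Addr → Addr → Prop) (α : Addr) : Set Addr := { β | r α β }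

/-- `S` is a union of `r`-classes, i.e. a set of types of the type system. -/
def Saturated (r : Addr → Addr → Prop) (S : Set Addr) : Prop :=
  ∀ α ∈ S, ∀ β, r α β → β ∈ S

/-- `S` is child-closed: with each address (type) it contains both of its children. -/
def ChildClosed (S : Set Addr) : Prop :=
  ∀ α ∈ S, α ++ [false] ∈ S ∧ α ++ [true] ∈ S

/-- The word `γ` determines a path through `S` from (the type of) `α`. -/
def PathThrough (S : Set Addr) (α γ : Addr) : Prop :=
  ∀ ζ : Addr, ζ <+: γ → α ++ ζ ∈ S

/-- `S` is strongly connected. -/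
def StronglyConnected (r : Addr → Addr → Prop) (S : Set Addr) : Prop :=
  ∀ α ∈ S, ∀ β ∈ S, ∃ γ : Addr, γ ≠ [] ∧ PathThrough S α γ ∧ r (α ++ γ) β

/-- A nucleus: a (nonempty) child-closed and strongly connected set of types. -/
def IsNucleus (r : Addr → Addr → Prop) (S : Set Addr) : Prop :=
  S.Nonempty ∧ Saturated r S ∧ ChildClosed S ∧ StronglyConnected r S

/-- `S` consists of exactly one type. -/
def IsSingleType (r : Addr → Addr → Prop) (S : Set Addr) : Prop :=
  ∃ α : Addr, S = typeOf r α

/-- A multinuclear type system: finitely many pairwise disjoint nuclei containing the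
types of all sufficiently long addresses. -/
def Multinuclear (r : Addr → Addr → Prop) : Prop :=
  ∃ (k : ℕ) (Q : Fin k → Set Addr), 0 < k ∧ (∀ i, IsNucleus r (Q i)) ∧
    (∀ i j, i ≠ j → Disjoint (Q i) (Q j)) ∧
    ∃ t : ℕ, 0 < t ∧ ∀ α : Addr, t ≤ α.length → ∃ i, α ∈ Q i

/-- A nuclear type system: a single nucleus containing the types of all sufficiently
long addresses. -/
def Nuclear (r : Addr → Addr → Prop) : Prop :=
  ∃ Q : Set Addr, IsNucleus r Q ∧ ∃ t : ℕ, 0 < t ∧ ∀ α : Addr, t ≤ α.length → α ∈ Q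

/-- An atomic binuclear type system: two disjoint singleton nuclei containing the types
of all sufficiently long addresses. -/
def AtomicBinuclear (r : Addr → Addr → Prop) : Prop :=
  ∃ Q₁ Q₂ : Set Addr, IsNucleus r Q₁ ∧ IsNucleus r Q₂ ∧ Disjoint Q₁ Q₂ ∧
    IsSingleType r Q₁ ∧ IsSingleType r Q₂ ∧
    ∃ t : ℕ, 0 < t ∧ ∀ α : Addr, t ≤ α.length → α ∈ Q₁ ∪ Q₂

/-- The data `(𝒬, ℛ)` witnessing that a type system is quasinuclear. -/
def QuasinuclearData (r : Addr → Addr → Prop) (Q R : Set Addr) : Prop :=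
  Q.Nonempty ∧ R.Nonempty ∧ Saturated r Q ∧ Saturated r R ∧ Disjoint Q R ∧
    (∃ t : ℕ, 0 < t ∧ ∀ α : Addr, t ≤ α.length → α ∈ Q ∪ R) ∧
    IsNucleus r R ∧ StronglyConnected r Q ∧ ChildClosed (Q ∪ R) ∧
    ∀ α ∈ Q, ∀ β ∈ R, ∃ γ : Addr, r (α ++ γ) β

/-- A quasinuclear type system. -/
def Quasinuclear (r : Addr → Addr → Prop) : Prop :=
  ∃ Q R : Set Addr, QuasinuclearData r Q R

/-- `𝒬†`: the types of `𝒬` both of whose children lie in `𝒬`. -/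
def QDagger (Q : Set Addr) : Set Addr :=
  { α ∈ Q | α ++ [false] ∈ Q ∧ α ++ [true] ∈ Q }

/-- An atomic quasinuclear type system: the nucleus `ℛ` is a single type. -/
def AtomicQuasinuclear (r : Addr → Addr → Prop) : Prop :=
  ∃ Q R : Set Addr, QuasinuclearData r Q R ∧ IsSingleType r R

/-!
A swap of two disjoint cones of equal type stabilizes the type system. If all types are dense, then
these swaps recover the type system from its stabilizer, and they move points out of any finite set.
Let `H` be an overgroup of the stabilizer of such a type system. Whether `H` contains the swap of
two disjoint cones, small enough not to cover Cantor space, depends only on their types, and "being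
swapped by `H`" is a quotient type system. If the type system is simple, there are two cases: either
this quotient is the type system itself, which `H` then stabilizes, or it is universal, and then `H`
contains all swaps, which generate `V`. So stabilizers of simple type systems with dense types are
maximal.

A binary sequence `f` gives a type system with types `x_0, x_1, …`, the children of `x_n` being
`x_{n+1}` and `x_{f n}`. Unless `f` is eventually periodic, it is simple with dense types: if `x_i`
and `x_j` are identified, so are `x_0` and `x_1`, because some `f (i + k)` differs from `f (j + k)`,
and then all `x_k` are. Distinct sequences give distinct type systems, hence distinct stabilizers,
and only countably many sequences are eventually periodic.
-/

/-! ### Words and cones -/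

section Cones

variable {α β κ : Addr} {p : Cantor}

lemma wcat_apply_of_lt {n : ℕ} (h : n < α.length) (w : Cantor) : wcat α w n = α[n] := by
  simp [wcat, h]

lemma wcat_apply_length_add (α : Addr) (w : Cantor) (n : ℕ) :
    wcat α w (α.length + n) = w n := by
  simp [wcat]

lemma wcat_append (α β : Addr) (w : Cantor) : wcat (α ++ β) w = wcat α (wcat β w) := by
  funext n
  rcases lt_or_ge n α.length with h | h
  · rw [wcat_apply_of_lt (by rw [List.length_append]; omega), wcat_apply_of_lt h,
      List.getElem_append_left h]
  obtain ⟨n, rfl⟩ := Nat.exists_eq_add_of_le h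
  rw [wcat_apply_length_add]
  rcases lt_or_ge n β.length with h' | h'
  · rw [wcat_apply_of_lt (by rw [List.length_append]; omega), wcat_apply_of_lt h']
    simp
  · obtain ⟨n, rfl⟩ := Nat.exists_eq_add_of_le h'
    rw [wcat_apply_length_add, ← add_assoc, ← List.length_append, wcat_apply_length_add]

lemma wcat_injective (α : Addr) : Function.Injective (wcat α) := fun w v h => by
  funext n
  rw [← wcat_apply_length_add α w, h, wcat_apply_length_add]

lemma wcat_mem_cone (α : Addr) (w : Cantor) : wcat α w ∈ cone α := ⟨w, rfl⟩

lemma cone_append_subset (α β : Addr) : cone (α ++ β) ⊆ cone α := by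
  rintro _ ⟨w, rfl⟩
  rw [wcat_append]
  exact wcat_mem_cone α _

lemma exists_mem_cone (n : ℕ) (p : Cantor) : ∃ α : Addr, α.length = n ∧ p ∈ cone α := by
  refine ⟨List.ofFn fun i : Fin n => p i, List.length_ofFn, fun k => p (n + k), ?_⟩
  funext k
  rcases lt_or_ge k n with h | h
  · rw [wcat_apply_of_lt (by simpa using h), List.getElem_ofFn]
  · simp [wcat, h]

lemma isPrefix_of_mem_cone (hα : p ∈ cone α) (hβ : p ∈ cone β)
    (hl : α.length ≤ β.length) : α <+: β := by
  obtain ⟨w, rfl⟩ := hα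
  obtain ⟨v, hv⟩ := hβ
  refine List.prefix_iff_getElem.2 ⟨hl, fun n hn => ?_⟩
  rw [← wcat_apply_of_lt hn w, ← hv, wcat_apply_of_lt (hn.trans_le hl)]

lemma wcat_left_injective : Function.Injective wcat := by
  suffices ∀ α β, wcat α = wcat β → α.length ≤ β.length → α = β by
    intro α β h
    rcases le_total α.length β.length with hl | hl
    exacts [this α β h hl, (this β α h.symm hl).symm]
  intro α β h hl
  obtain ⟨x, rfl⟩ := isPrefix_of_mem_cone (wcat_mem_cone α default)
    (h ▸ wcat_mem_cone β _) hl
  have key (w : Cantor) : w = wcat x w :=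
    wcat_injective α (by rw [← wcat_append, ← h])
  cases x with
  | nil => simp
  | cons b x =>
    have := congrFun (key fun _ => !b) 0
    rw [wcat_apply_of_lt (by simp)] at this
    simp at this

/-- Two addresses are incomparable if neither is a prefix of the other; this is encoded as
disjointness of their cones. -/
def Incomp (α β : Addr) : Prop := Disjoint (cone α) (cone β)

namespace Incomp

lemma symm (h : Incomp α β) : Incomp β α := Disjoint.symm h

lemma append_left (h : Incomp α β) (x : Addr) : Incomp (α ++ x) β :=
  Disjoint.mono_left (cone_append_subset α x) h

lemma append_right (h : Incomp α β) (y : Addr) : Incomp α (β ++ y) :=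
  (h.symm.append_left y).symm

lemma append (h : Incomp α β) (x y : Addr) : Incomp (α ++ x) (β ++ y) :=
  (h.append_left x).append_right y

end Incomp

lemma incomp_or_isPrefix (hl : α.length ≤ β.length) : Incomp α β ∨ α <+: β := by
  refine or_iff_not_imp_left.2 fun h => ?_
  obtain ⟨p, hα, hβ⟩ := Set.not_disjoint_iff.1 h
  exact isPrefix_of_mem_cone hα hβ hl

lemma incomp_of_length_eq (hl : α.length = β.length) (hne : α ≠ β) : Incomp α β :=
  (incomp_or_isPrefix hl.le).resolve_right fun h => hne (h.eq_of_length hl)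

lemma incomp_children (κ : Addr) : Incomp (κ ++ [false]) (κ ++ [true]) :=
  incomp_of_length_eq (by simp) (by simp)

lemma Incomp.of_cons_ne {a b : Bool} (h : a ≠ b) (α β : Addr) : Incomp (a :: α) (b :: β) :=
  (incomp_of_length_eq (α := [a]) (β := [b]) rfl (by simpa using h)).append α β

/-- The cones of `α` and `β` leave room for a third cone. -/
def HasRoom (α β : Addr) : Prop := ∃ κ, Incomp κ α ∧ Incomp κ β

namespace HasRoom

lemma symm (h : HasRoom α β) : HasRoom β α := h.imp fun _ => And.symm

lemma append (h : HasRoom α β) (x y : Addr) : HasRoom (α ++ x) (β ++ y) :=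
  h.imp fun _ hκ => ⟨hκ.1.append_right x, hκ.2.append_right y⟩

end HasRoom

lemma hasRoom_of_two_le_length (hα : 2 ≤ α.length) (hβ : 2 ≤ β.length) : HasRoom α β := by
  match α, hα, β, hβ with
  | a :: a' :: α, _, b :: b' :: β, _ =>
    refine ⟨[!a, !b'], .of_cons_ne (Bool.not_ne_self a) _ _, ?_⟩
    exact (incomp_of_length_eq (α := [!a, !b']) (β := [b, b']) rfl (by simp)).append_right β

lemma Incomp.hasRoom_children (h : Incomp α β) (b : Bool) : HasRoom (α ++ [b]) (β ++ [b]) :=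
  ⟨α ++ [!b], incomp_of_length_eq (by simp) (by simp), h.append _ _⟩

lemma exists_incomp_append (α β : Addr) : ∃ x y, Incomp (α ++ x) (β ++ y) := by
  refine ⟨List.replicate β.length false ++ [false], List.replicate α.length true ++ [true],
    incomp_of_length_eq (by simp [add_left_comm]) fun h => ?_⟩
  simpa using congrArg List.getLast? h

lemma exists_cone_disjoint {D : Set Cantor} (hD : D.Finite) (κ : Addr) :
    ∃ x, Disjoint (cone (κ ++ x)) D := by
  induction D, hD using Set.Finite.induction_on with
  | empty => exact ⟨[], Set.disjoint_empty _⟩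
  | @insert p D _ _ ih =>
    obtain ⟨x, hx⟩ := ih
    obtain ⟨b, hb⟩ : ∃ b, p ∉ cone (κ ++ x ++ [b]) := by
      by_contra! h
      exact Set.disjoint_left.1 (incomp_children (κ ++ x)) (h false) (h true)
    refine ⟨x ++ [b], ?_⟩
    rw [← List.append_assoc, Set.disjoint_insert_right]
    exact ⟨hb, hx.mono_left (cone_append_subset _ _)⟩

end Cones

namespace actsOn

variable {g h : Equiv.Perm Cantor} {α β γ α' β' : Addr}

lemma append (hg : actsOn g α β) (x : Addr) : actsOn g (α ++ x) (β ++ x) := fun w => by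
  rw [wcat_append, wcat_append, hg]

lemma inv (hg : actsOn g α β) : actsOn g⁻¹ β α := fun w => by
  rw [← hg w, Equiv.Perm.inv_eq_iff_eq]

lemma inv_iff : actsOn g⁻¹ β α ↔ actsOn g α β := ⟨fun hg => by simpa using hg.inv, inv⟩

lemma mul (hg : actsOn g β γ) (hh : actsOn h α β) : actsOn (g * h) α γ := fun w => by
  rw [Equiv.Perm.mul_apply, hh, hg]

lemma of_children (h₀ : actsOn g (α ++ [false]) (β ++ [false]))
    (h₁ : actsOn g (α ++ [true]) (β ++ [true])) : actsOn g α β := fun w => by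
  obtain ⟨γ, hγ, v, rfl⟩ := exists_mem_cone 1 w
  obtain ⟨b, rfl⟩ := List.length_eq_one_iff.1 hγ
  rw [← wcat_append, ← wcat_append]
  cases b
  exacts [h₀ v, h₁ v]

lemma unique (hβ : actsOn g α β) (hβ' : actsOn g α β') : β = β' :=
  wcat_left_injective (funext fun w => by rw [← hβ, ← hβ'])

lemma image_cone (hg : actsOn g α β) : g '' cone α = cone β := by
  rw [cone, cone, ← Set.range_comp]
  exact congrArg Set.range (funext hg)

lemma mem_cone_iff (hg : actsOn g α β) {p : Cantor} : g p ∈ cone β ↔ p ∈ cone α := by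
  rw [← hg.image_cone, g.injective.mem_set_image]

lemma incomp (hα : actsOn g α α') (hβ : actsOn g β β') (h : Incomp α β) : Incomp α' β' := by
  rw [Incomp, ← hα.image_cone, ← hβ.image_cone]
  exact (Set.disjoint_image_iff g.injective).2 h

end actsOn

/-! ### Cone partitions and Thompson's group -/

/-- The cones of the addresses `A i` form a partition of Cantor space. -/
structure IsConePartition {ι : Type*} (A : ι → Addr) : Prop where
  incomp : Pairwise fun i j => Incomp (A i) (A j)
  covers : ∀ p, ∃ i, p ∈ cone (A i)

lemma isConePartition_vector (N : ℕ) :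
    IsConePartition (List.Vector.toList (α := Bool) (n := N)) where
  incomp u v huv := incomp_of_length_eq (by simp) fun h => huv (List.Vector.toList_injective h)
  covers p := by
    obtain ⟨α, hα, hp⟩ := exists_mem_cone N p
    exact ⟨⟨α, hα⟩, hp⟩

namespace IsConePartition

variable {ι : Type*} {A B : ι → Addr} {g : Equiv.Perm Cantor}

lemma map (hA : IsConePartition A) (h : ∀ i, actsOn g (A i) (B i)) : IsConePartition B where
  incomp i j hij := (h i).incomp (h j) (hA.incomp hij)
  covers p := by
    obtain ⟨i, hi⟩ := hA.covers (g⁻¹ p)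
    exact ⟨i, by simpa using (h i).mem_cone_iff.2 hi⟩

lemma comp_equiv {κ : Type*} (hA : IsConePartition A) (e : κ ≃ ι) :
    IsConePartition (A ∘ e) where
  incomp _ _ hij := hA.incomp (e.injective.ne hij)
  covers p := by
    obtain ⟨i, hi⟩ := hA.covers p
    exact ⟨e.symm i, by simpa using hi⟩

lemma exists_isPrefix {α : Addr} (hA : IsConePartition A) (hN : ∀ i, (A i).length ≤ α.length) :
    ∃ i, A i <+: α := by
  obtain ⟨i, hi⟩ := hA.covers (wcat α default)
  exact ⟨i, isPrefix_of_mem_cone hi (wcat_mem_cone α _) (hN i)⟩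

lemma perm_ext {h : Equiv.Perm Cantor} (hA : IsConePartition A)
    (hg : ∀ i, actsOn g (A i) (B i)) (hh : ∀ i, actsOn h (A i) (B i)) : g = h := by
  ext1 p
  obtain ⟨i, w, rfl⟩ := hA.covers p
  rw [hg, hh]

end IsConePartition

lemma isPrefixSubst_iff {g : Equiv.Perm Cantor} :
    IsPrefixSubst g ↔ ∃ (n : ℕ) (A B : Fin n → Addr),
      IsConePartition A ∧ ∀ i, actsOn g (A i) (B i) := by
  constructor
  · rintro ⟨n, A, B, hA, hA', -, -, hAB⟩
    exact ⟨n, A, B, ⟨hA, Set.iUnion_eq_univ_iff.1 hA'⟩, hAB⟩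
  · rintro ⟨n, A, B, hA, hAB⟩
    have hB := hA.map hAB
    exact ⟨n, A, B, hA.incomp, Set.iUnion_eq_univ_iff.2 hA.covers, hB.incomp,
      Set.iUnion_eq_univ_iff.2 hB.covers, hAB⟩

lemma IsConePartition.isPrefixSubst {ι : Type*} [Finite ι] {A B : ι → Addr}
    {g : Equiv.Perm Cantor} (hA : IsConePartition A) (h : ∀ i, actsOn g (A i) (B i)) :
    IsPrefixSubst g := by
  obtain ⟨n, ⟨e⟩⟩ := Finite.exists_equiv_fin ι
  exact isPrefixSubst_iff.2 ⟨n, A ∘ e.symm, B ∘ e.symm, hA.comp_equiv e.symm, fun i => h _⟩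

lemma isPrefixSubst_of_forall_length_eq {g : Equiv.Perm Cantor} (N : ℕ)
    (h : ∀ α : Addr, α.length = N → ∃ β, actsOn g α β) : IsPrefixSubst g := by
  choose B hB using fun v : List.Vector Bool N => h v.toList v.toList_length
  exact (isConePartition_vector N).isPrefixSubst hB

namespace IsPrefixSubst

variable {g h : Equiv.Perm Cantor}

lemma exists_actsOn (hg : IsPrefixSubst g) (m : ℕ) :
    ∃ N, ∀ α : Addr, N ≤ α.length → ∃ β, m ≤ β.length ∧ actsOn g α β := by
  obtain ⟨n, A, B, hA, hAB⟩ := isPrefixSubst_iff.1 hg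
  obtain ⟨K, hK⟩ := (Set.finite_range fun i => (A i).length).bddAbove
  replace hK i : (A i).length ≤ K := hK ⟨i, rfl⟩
  refine ⟨K + m, fun α hα => ?_⟩
  obtain ⟨i, x, rfl⟩ := hA.exists_isPrefix (α := α) fun i => (hK i).trans (by omega)
  have := hK i
  rw [List.length_append] at hα
  exact ⟨B i ++ x, by rw [List.length_append]; omega, (hAB i).append x⟩

protected lemma one : IsPrefixSubst 1 :=
  isPrefixSubst_of_forall_length_eq 0 fun α _ => ⟨α, fun _ => rfl⟩

protected lemma mul (hg : IsPrefixSubst g) (hh : IsPrefixSubst h) : IsPrefixSubst (g * h) := by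
  obtain ⟨N, hN⟩ := hg.exists_actsOn 0
  obtain ⟨K, hK⟩ := hh.exists_actsOn N
  refine isPrefixSubst_of_forall_length_eq K fun α hα => ?_
  obtain ⟨β, hl, hβ⟩ := hK α hα.ge
  obtain ⟨γ, -, hγ⟩ := hN β hl
  exact ⟨γ, hγ.mul hβ⟩

protected lemma inv (hg : IsPrefixSubst g) : IsPrefixSubst g⁻¹ := by
  obtain ⟨n, A, B, hA, hAB⟩ := isPrefixSubst_iff.1 hg
  exact (hA.map hAB).isPrefixSubst fun i => (hAB i).inv

end IsPrefixSubst

/-! ### Swaps of two cones -/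

open Classical in
/-- The map exchanging `αw` and `βw` for all `w` and fixing the points outside both cones. It is
meaningful only for incomparable `α` and `β`, see `coneSwap`. -/
noncomputable def swapFun (α β : Addr) (p : Cantor) : Cantor :=
  if p ∈ cone α then wcat β fun n => p (α.length + n)
  else if p ∈ cone β then wcat α fun n => p (β.length + n)
  else p

section ConeSwap

variable {α β γ δ : Addr}

lemma swapFun_left (α β : Addr) (w : Cantor) : swapFun α β (wcat α w) = wcat β w := by
  simp only [swapFun, if_pos (wcat_mem_cone α w), wcat_apply_length_add]

lemma swapFun_right (h : Incomp α β) (w : Cantor) : swapFun α β (wcat β w) = wcat α w := by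
  simp only [swapFun, if_neg (Set.disjoint_right.1 h (wcat_mem_cone β w)),
    if_pos (wcat_mem_cone β w), wcat_apply_length_add]

lemma swapFun_of_notMem {p : Cantor} (hα : p ∉ cone α) (hβ : p ∉ cone β) :
    swapFun α β p = p := by
  rw [swapFun, if_neg hα, if_neg hβ]

lemma swapFun_involutive (h : Incomp α β) : Function.Involutive (swapFun α β) := fun p => by
  by_cases hα : p ∈ cone α
  · obtain ⟨w, rfl⟩ := hα
    rw [swapFun_left, swapFun_right h]
  by_cases hβ : p ∈ cone β
  · obtain ⟨w, rfl⟩ := hβ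
    rw [swapFun_right h, swapFun_left]
  rw [swapFun_of_notMem hα hβ, swapFun_of_notMem hα hβ]

/-- The element of `V` exchanging the cones of two incomparable addresses by prefix
substitution. -/
noncomputable def coneSwap (h : Incomp α β) : Equiv.Perm Cantor :=
  (swapFun_involutive h).toPerm

lemma coneSwap_left (h : Incomp α β) : actsOn (coneSwap h) α β := swapFun_left α β

lemma coneSwap_right (h : Incomp α β) : actsOn (coneSwap h) β α := swapFun_right h

lemma coneSwap_of_notMem (h : Incomp α β) {p : Cantor} (hα : p ∉ cone α) (hβ : p ∉ cone β) :
    coneSwap h p = p :=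
  swapFun_of_notMem hα hβ

lemma coneSwap_of_incomp (h : Incomp α β) (hα : Incomp γ α) (hβ : Incomp γ β) :
    actsOn (coneSwap h) γ γ := fun w =>
  coneSwap_of_notMem h (Set.disjoint_left.1 hα (wcat_mem_cone γ w))
    (Set.disjoint_left.1 hβ (wcat_mem_cone γ w))

lemma eq_coneSwap (h : Incomp α β) {g : Equiv.Perm Cantor} (hα : actsOn g α β)
    (hβ : actsOn g β α) (hg : ∀ p, p ∉ cone α → p ∉ cone β → g p = p) : g = coneSwap h := by
  ext1 p
  by_cases hpα : p ∈ cone α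
  · obtain ⟨w, rfl⟩ := hpα
    rw [hα, coneSwap_left]
  by_cases hpβ : p ∈ cone β
  · obtain ⟨w, rfl⟩ := hpβ
    rw [hβ, coneSwap_right]
  rw [hg p hpα hpβ, coneSwap_of_notMem h hpα hpβ]

lemma coneSwap_comm (h : Incomp α β) : coneSwap h.symm = coneSwap h :=
  eq_coneSwap h (coneSwap_right _) (coneSwap_left _) fun _ hα hβ => coneSwap_of_notMem _ hβ hα

lemma conj_coneSwap {g : Equiv.Perm Cantor} (hα : actsOn g α γ) (hβ : actsOn g β δ)
    (h : Incomp α β) : g * coneSwap h * g⁻¹ = coneSwap (hα.incomp hβ h) := by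
  refine eq_coneSwap _ ((hβ.mul (coneSwap_left h)).mul hα.inv)
    ((hα.mul (coneSwap_right h)).mul hβ.inv) fun p hγ hδ => ?_
  rw [Equiv.Perm.mul_apply, Equiv.Perm.mul_apply, coneSwap_of_notMem h]
  · simp
  · rwa [hα.inv.mem_cone_iff]
  · rwa [hβ.inv.mem_cone_iff]

lemma coneSwap_eq_mul (h : Incomp α β) :
    coneSwap h = coneSwap (h.append [false] [false]) * coneSwap (h.append [true] [true]) := by
  have hf := h.append [false] [false]
  have ht := h.append [true] [true]
  refine (eq_coneSwap h (.of_children ?_ ?_) (.of_children ?_ ?_) fun p hα hβ => ?_).symm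
  · exact (coneSwap_left hf).mul
      (coneSwap_of_incomp ht (incomp_children α) (h.append [false] [true]))
  · exact (coneSwap_of_incomp hf (h.symm.append [true] [false]) (incomp_children β).symm).mul
      (coneSwap_left ht)
  · exact (coneSwap_right hf).mul
      (coneSwap_of_incomp ht (h.symm.append [false] [true]) (incomp_children β))
  · exact (coneSwap_of_incomp hf (incomp_children α).symm (h.append [true] [false])).mul
      (coneSwap_right ht)
  · have hα' x : p ∉ cone (α ++ x) := fun hp => hα (cone_append_subset α x hp)
    have hβ' x : p ∉ cone (β ++ x) := fun hp => hβ (cone_append_subset β x hp)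
    rw [Equiv.Perm.mul_apply, coneSwap_of_notMem ht (hα' _) (hβ' _),
      coneSwap_of_notMem hf (hα' _) (hβ' _)]

end ConeSwap

/-! ### Swaps of cones generate Thompson's group -/

namespace Incomp

variable {α β : Addr}

lemma not_isPrefix (h : Incomp α β) : ¬ α <+: β := by
  rintro ⟨x, rfl⟩
  exact Set.disjoint_right.1 h (wcat_mem_cone _ default)
    (cone_append_subset α x (wcat_mem_cone _ default))

lemma take_right {n : ℕ} (h : Incomp α β) (hα : α.length ≤ n) (hβ : n ≤ β.length) :
    Incomp α (β.take n) :=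
  (incomp_or_isPrefix (by simpa [hβ] using hα)).resolve_right fun h' =>
    h.not_isPrefix (h'.trans (List.take_prefix n β))

end Incomp

namespace IsConePartition

variable {ι : Type*} {A : ι → Addr}

lemma eq_of_append_eq (hA : IsConePartition A) {i j : ι} {x y : Addr}
    (h : A i ++ x = A j ++ y) : i = j := by
  by_contra hij
  exact ((hA.incomp hij).append x y).not_isPrefix (h ▸ List.prefix_rfl)

lemma injective (hA : IsConePartition A) : Function.Injective A := fun i j h =>
  hA.eq_of_append_eq (x := []) (y := []) (by rw [h])

/-- Kraft's equality, multiplied by `2 ^ N`: the words of length `N` are distributed over the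
cones. -/
lemma sum_two_pow [Fintype ι] (hA : IsConePartition A) {N : ℕ} (hN : ∀ i, (A i).length ≤ N) :
    ∑ i, 2 ^ (N - (A i).length) = 2 ^ N := by
  let f (x : Σ i, List.Vector Bool (N - (A i).length)) : List.Vector Bool N :=
    ⟨A x.1 ++ x.2.toList, by simp [hN]⟩
  have hf : Function.Bijective f := by
    constructor
    · rintro ⟨i, x⟩ ⟨j, y⟩ h
      have h' : A i ++ x.toList = A j ++ y.toList := congrArg List.Vector.toList h
      obtain rfl := hA.eq_of_append_eq h'
      rw [List.Vector.toList_injective (List.append_cancel_left h')]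
    · rintro ⟨α, hα⟩
      obtain ⟨i, x, rfl⟩ := hA.exists_isPrefix fun i => (hN i).trans hα.ge
      exact ⟨⟨i, x, by rw [← hα, List.length_append, Nat.add_sub_cancel_left]⟩, rfl⟩
  simpa using Fintype.card_of_bijective hf

lemma length_eq_of_forall_le [Fintype ι] (hA : IsConePartition A) {N : ℕ}
    (hcard : Fintype.card ι = 2 ^ N) (hN : ∀ i, (A i).length ≤ N) (i : ι) :
    (A i).length = N := by
  have hsum : ∑ _i : ι, 1 = ∑ i, 2 ^ (N - (A i).length) := by
    rw [hA.sum_two_pow hN, ← hcard, Finset.sum_const, Finset.card_univ, smul_eq_mul, mul_one]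
  have hi : 1 = 2 ^ (N - (A i).length) :=
    (Finset.sum_eq_sum_iff_of_le fun i _ => Nat.one_le_two_pow).1 hsum i (Finset.mem_univ i)
  have hsub : N - (A i).length = 0 := (Nat.pow_eq_one.1 hi.symm).resolve_left (by decide)
  exact (hN i).antisymm (Nat.sub_eq_zero_iff_le.1 hsub)

lemma exists_length_lt [Fintype ι] (hA : IsConePartition A) {N : ℕ}
    (hcard : Fintype.card ι = 2 ^ N) {i : ι} (hi : N < (A i).length) :
    ∃ j, (A j).length < N := by
  by_contra! h
  obtain ⟨K, hK⟩ := (Set.finite_range fun i => (A i).length).bddAbove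
  replace hK j : (A j).length ≤ K := hK ⟨j, rfl⟩
  have hlt : ∑ j, 2 ^ (K - (A j).length) < ∑ _j : ι, 2 ^ (K - N) :=
    Finset.sum_lt_sum (fun j _ => Nat.pow_le_pow_right two_pos (Nat.sub_le_sub_left (h j) K))
      ⟨i, Finset.mem_univ i, Nat.pow_lt_pow_right one_lt_two (by have := hK i; omega)⟩
  rw [hA.sum_two_pow hK, Finset.sum_const, Finset.card_univ, hcard, smul_eq_mul, ← pow_add,
    Nat.add_sub_cancel' (hi.le.trans (hK i))] at hlt
  exact hlt.false

lemma actsOn_coneSwap [DecidableEq ι] (hA : IsConePartition A) {i j : ι} (hij : i ≠ j) (k : ι) :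
    actsOn (coneSwap (hA.incomp hij)) (A k) (A (Equiv.swap i j k)) := by
  by_cases hi : k = i
  · subst hi
    rw [Equiv.swap_apply_left]
    exact coneSwap_left _
  by_cases hj : k = j
  · subst hj
    rw [Equiv.swap_apply_right]
    exact coneSwap_right _
  · rw [Equiv.swap_apply_of_ne_of_ne hi hj]
    exact coneSwap_of_incomp _ (hA.incomp hi) (hA.incomp hj)

end IsConePartition

lemma exists_actsOn_coneSwap_length_le {σ τ β : Addr} (hστ : Incomp σ τ)
    (hl : τ.length ≤ σ.length) (h : β = τ ∨ σ <+: β ∨ Incomp β σ ∧ Incomp β τ) :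
    ∃ β', actsOn (coneSwap hστ) β β' ∧ β'.length ≤ max σ.length β.length := by
  rcases h with rfl | ⟨x, rfl⟩ | ⟨hσ, hτ⟩
  · exact ⟨σ, coneSwap_right hστ, le_max_left _ _⟩
  · exact ⟨τ ++ x, (coneSwap_left hστ).append x, le_max_of_le_right (by simpa using hl)⟩
  · exact ⟨β, coneSwap_of_incomp hστ hσ hτ, le_max_right _ _⟩

namespace IsConePartition

variable {ι : Type*} {A B : ι → Addr}

/-- The balancing step: a prefix `σ` of length `N` of the long address `B i` is exchanged with the
short address `τ = B j`. -/
lemma exists_coneSwap_sum_lt [Fintype ι] (hB : IsConePartition B) {N : ℕ} {i j : ι}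
    (hi : N < (B i).length) (hj : (B j).length < N) :
    ∃ (σ τ : Addr) (h : Incomp σ τ) (B' : ι → Addr), (∀ k, actsOn (coneSwap h) (B k) (B' k)) ∧
      ∑ k, max N (B' k).length < ∑ k, max N (B k).length := by
  have hσ : ((B i).take N).length = N := by simpa using hi.le
  have hincomp {k : ι} (hki : k ≠ i) (hk : (B k).length ≤ N) : Incomp (B k) ((B i).take N) :=
    (hB.incomp hki).take_right hk hi.le
  have h : Incomp ((B i).take N) (B j) :=
    (hincomp (by rintro rfl; exact (hi.trans hj).false) hj.le).symm
  have hcases (k : ι) : B k = B j ∨ (B i).take N <+: B k ∨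
      Incomp (B k) ((B i).take N) ∧ Incomp (B k) (B j) := by
    by_cases hkj : k = j
    · exact .inl (congrArg B hkj)
    refine .inr ?_
    rcases lt_or_ge N (B k).length with hk | hk
    · rw [or_comm]
      exact (incomp_or_isPrefix (hσ.le.trans hk.le)).imp_left fun h' => ⟨h'.symm, hB.incomp hkj⟩
    · exact .inr ⟨hincomp (by rintro rfl; exact hk.not_gt hi) hk, hB.incomp hkj⟩
  choose B' hB' hlen using fun k => exists_actsOn_coneSwap_length_le h (hσ.symm ▸ hj.le) (hcases k)
  refine ⟨_, _, h, B', hB', Finset.sum_lt_sum (fun k _ => ?_) ⟨i, Finset.mem_univ i, ?_⟩⟩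
  · exact max_le (le_max_left _ _) (hσ ▸ hlen k)
  · have hBi : B' i = B j ++ (B i).drop N :=
      (hB' i).unique (by simpa using (coneSwap_left h).append ((B i).drop N))
    rw [hBi, List.length_append, List.length_drop, max_lt_iff, lt_max_iff, lt_max_iff]
    omega

variable {H : Subgroup (Equiv.Perm Cantor)} {g : Equiv.Perm Cantor}

lemma mem_of_actsOn_perm [Finite ι] (hA : IsConePartition A)
    (hH : ∀ α β (h : Incomp α β), coneSwap h ∈ H) (π : Equiv.Perm ι)
    (hg : ∀ i, actsOn g (A i) (A (π i))) : g ∈ H := by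
  classical
  induction π using Equiv.Perm.swap_induction_on generalizing g with
  | one =>
    rw [hA.perm_ext hg fun i => (fun _ => rfl : actsOn 1 (A i) (A i))]
    exact H.one_mem
  | swap_mul π i j hij ih =>
    refine (H.mul_mem_cancel_left (hH _ _ (hA.incomp hij))).1 (ih fun k => ?_)
    simpa using (hA.actsOn_coneSwap hij _).mul (hg k)

end IsConePartition

lemma mem_of_forall_actsOn_vector {H : Subgroup (Equiv.Perm Cantor)}
    (hH : ∀ α β (h : Incomp α β), coneSwap h ∈ H) {N : ℕ} {B : List.Vector Bool N → Addr}
    {g : Equiv.Perm Cantor} (hg : ∀ v, actsOn g v.toList (B v)) : g ∈ H := by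
  induction hn : ∑ v, max N (B v).length using Nat.strong_induction_on generalizing g B with
  | _ n ih =>
  have hB : IsConePartition B := (isConePartition_vector N).map hg
  have hcard : Fintype.card (List.Vector Bool N) = 2 ^ N := by simp
  by_cases hlong : ∃ u, N < (B u).length
  · obtain ⟨u, hu⟩ := hlong
    obtain ⟨v, hv⟩ := hB.exists_length_lt hcard hu
    obtain ⟨σ, τ, h, B', hB', hlt⟩ := hB.exists_coneSwap_sum_lt hu hv
    exact (H.mul_mem_cancel_left (hH σ τ h)).1
      (ih _ (hn ▸ hlt) (fun k => (hB' k).mul (hg k)) rfl)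
  · push Not at hlong
    let π (v : List.Vector Bool N) : List.Vector Bool N :=
      ⟨B v, hB.length_eq_of_forall_le hcard hlong v⟩
    have hπ : Function.Injective π := fun u v huv =>
      hB.injective (congrArg List.Vector.toList huv)
    exact (isConePartition_vector N).mem_of_actsOn_perm hH
      (Equiv.ofBijective π (Finite.injective_iff_bijective.1 hπ)) hg

/-- A partition refining the source of `g` to words of one length `N` reduces the claim to a
balancing argument on the image partition. -/
theorem IsPrefixSubst.mem_of_forall_coneSwap_mem {H : Subgroup (Equiv.Perm Cantor)}
    {g : Equiv.Perm Cantor} (hg : IsPrefixSubst g)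
    (hH : ∀ α β (h : Incomp α β), coneSwap h ∈ H) : g ∈ H := by
  obtain ⟨N, hN⟩ := hg.exists_actsOn 0
  choose B _ hB using fun v : List.Vector Bool N => hN v.toList v.toList_length.ge
  exact mem_of_forall_actsOn_vector hH hB

/-! ### Type systems and their stabilizers -/

section TypeSystem

variable {r s : Addr → Addr → Prop} {α β γ α' β' : Addr} {g : Equiv.Perm Cantor}

namespace IsTypeSystem

lemma refl (hr : IsTypeSystem r) (α : Addr) : r α α := hr.1.refl α

lemma symm (hr : IsTypeSystem r) (h : r α β) : r β α := hr.1.symm h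

lemma trans (hr : IsTypeSystem r) (hαβ : r α β) (hβγ : r β γ) : r α γ := hr.1.trans hαβ hβγ

lemma append (hr : IsTypeSystem r) (h : r α β) (x : Addr) : r (α ++ x) (β ++ x) := by
  induction x generalizing α β with
  | nil => simpa
  | cons b x ih =>
    rw [List.append_cons, List.append_cons β]
    cases b
    exacts [ih (hr.2.1 α β h).1, ih (hr.2.1 α β h).2]

lemma of_forall_append (hr : IsTypeSystem r) (N : ℕ)
    (h : ∀ x : Addr, x.length = N → r (α ++ x) (β ++ x)) : r α β := by
  induction N generalizing α β with
  | zero => simpa using h [] rfl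
  | succ N ih =>
    have hchild b : r (α ++ [b]) (β ++ [b]) := ih fun x hx => by
      simpa using h (b :: x) (by simp [hx])
    exact hr.2.2 α β (hchild false) (hchild true)

lemma iff_forall_append (hr : IsTypeSystem r) (N : ℕ) :
    r α β ↔ ∀ x : Addr, x.length = N → r (α ++ x) (β ++ x) :=
  ⟨fun h x _ => hr.append h x, hr.of_forall_append N⟩

end IsTypeSystem

lemma isTypeSystem_true : IsTypeSystem fun _ _ => True :=
  ⟨⟨fun _ => trivial, fun _ => trivial, fun _ _ => trivial⟩, fun _ _ _ => ⟨trivial, trivial⟩,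
    fun _ _ _ _ => trivial⟩

/-- `g` preserves equivalence and inequivalence wherever its action on addresses is defined. For
elements of `V` this agrees with stabilizing `r` up to finitely many addresses, see
`mem_stabSet`. -/
def PreservesRel (r : Addr → Addr → Prop) (g : Equiv.Perm Cantor) : Prop :=
  ∀ α α' β β', actsOn g α β → actsOn g α' β' → (r α α' ↔ r β β')

/-- Equivalence of two addresses can be tested on their descendants of any fixed depth, and all
descendants of large depth lie in the cofinite set. -/
lemma mem_stabSet (hr : IsTypeSystem r) :
    g ∈ StabSet r ↔ IsPrefixSubst g ∧ PreservesRel r g := by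
  refine and_congr_right fun hg => ⟨?_, fun h => ?_⟩
  · rintro ⟨Ω₀, hfin, -, h⟩ α α' β β' hα hα'
    obtain ⟨N, hN⟩ := (hfin.image List.length).bddAbove
    have hmem (γ x : Addr) (hx : x.length = N + 1) : γ ++ x ∈ Ω₀ := by
      by_contra hγ
      have := hN ⟨γ ++ x, hγ, rfl⟩
      rw [List.length_append] at this
      omega
    rw [hr.iff_forall_append (N + 1), hr.iff_forall_append (α := β) (N + 1)]
    exact forall₂_congr fun x hx =>
      h _ (hmem α x hx) _ (hmem α' x hx) _ _ (hα.append x) (hα'.append x)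
  · obtain ⟨N, hN⟩ := hg.exists_actsOn 0
    refine ⟨{α | ∃ β, actsOn g α β}, (List.finite_length_lt Bool N).subset fun α hα => ?_,
      fun _ => id, fun α _ α' _ β β' => h α α' β β'⟩
    by_contra hl
    exact hα ((hN α (not_lt.1 hl)).imp fun _ => And.right)

lemma PreservesRel.mul {h : Equiv.Perm Cantor} (hr : IsTypeSystem r) (hg : IsPrefixSubst g)
    (hh : IsPrefixSubst h) (hgr : PreservesRel r g) (hhr : PreservesRel r h) :
    PreservesRel r (g * h) := by
  intro α α' γ γ' hα hα'
  obtain ⟨N, hN⟩ := hg.exists_actsOn 0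
  obtain ⟨K, hK⟩ := hh.exists_actsOn N
  rw [hr.iff_forall_append K, hr.iff_forall_append (α := γ) K]
  refine forall₂_congr fun x hx => ?_
  obtain ⟨β, hl, hβ⟩ := hK (α ++ x) (by simp [hx])
  obtain ⟨β', hl', hβ'⟩ := hK (α' ++ x) (by simp [hx])
  obtain ⟨δ, -, hδ⟩ := hN β hl
  obtain ⟨δ', -, hδ'⟩ := hN β' hl'
  rw [(hα.append x).unique (hδ.mul hβ), (hα'.append x).unique (hδ'.mul hβ'),
    hhr _ _ _ _ hβ hβ', hgr _ _ _ _ hδ hδ']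

/-- `StabSet r` as a subgroup of the group of all permutations of Cantor space. -/
def stabSubgroup (hr : IsTypeSystem r) : Subgroup (Equiv.Perm Cantor) where
  carrier := StabSet r
  one_mem' := (mem_stabSet hr).2 ⟨.one, fun α α' β β' hα hα' => by
    rw [hα.unique fun _ => rfl, hα'.unique fun _ => rfl]⟩
  mul_mem' hg hh := by
    rw [mem_stabSet hr] at hg hh ⊢
    exact ⟨hg.1.mul hh.1, .mul hr hg.1 hh.1 hg.2 hh.2⟩
  inv_mem' hg := by
    rw [mem_stabSet hr] at hg ⊢
    exact ⟨hg.1.inv, fun α α' β β' hα hα' =>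
      (hg.2 _ _ _ _ (actsOn.inv_iff.1 hα) (actsOn.inv_iff.1 hα')).symm⟩

lemma mem_stabSet_of_forall_le_length (hr : IsTypeSystem r) (N : ℕ)
    (h : ∀ γ : Addr, N ≤ γ.length → ∃ δ, actsOn g γ δ ∧ r γ δ) : g ∈ StabSet r := by
  have hfix {γ δ : Addr} (hγ : actsOn g γ δ) : r γ δ := hr.of_forall_append N fun x hx => by
    obtain ⟨δ', hδ', hr'⟩ := h (γ ++ x) (by simp [hx])
    rwa [(hγ.append x).unique hδ']
  refine (mem_stabSet hr).2 ⟨isPrefixSubst_of_forall_length_eq N fun γ hγ =>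
    (h γ hγ.ge).imp fun _ => And.left, fun α α' β β' hα hα' => ⟨fun e => ?_, fun e => ?_⟩⟩
  · exact hr.trans (hr.symm (hfix hα)) (hr.trans e (hfix hα'))
  · exact hr.trans (hfix hα) (hr.trans e (hr.symm (hfix hα')))

lemma coneSwap_mem_stabSet (hr : IsTypeSystem r) (h : Incomp α β) (hαβ : r α β) :
    coneSwap h ∈ StabSet r := by
  refine mem_stabSet_of_forall_le_length hr (max α.length β.length) fun γ hγ => ?_
  rcases incomp_or_isPrefix (le_of_max_le_left hγ) with hα | ⟨x, rfl⟩
  · rcases incomp_or_isPrefix (le_of_max_le_right hγ) with hβ | ⟨x, rfl⟩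
    · exact ⟨γ, coneSwap_of_incomp h hα.symm hβ.symm, hr.refl γ⟩
    · exact ⟨α ++ x, (coneSwap_right h).append x, hr.append (hr.symm hαβ) x⟩
  · exact ⟨β ++ x, (coneSwap_left h).append x, hr.append hαβ x⟩

lemma stabSet_true : (StabSet fun _ _ => True) = VSet :=
  Set.ext fun _ => (mem_stabSet isTypeSystem_true).trans
    (and_iff_left fun _ _ _ _ _ _ => Iff.rfl)

end TypeSystem

/-! ### Type systems all of whose types are dense -/

/-- Every type is dense: each cone contains a cone of each type. -/
def TypesDense (r : Addr → Addr → Prop) : Prop := ∀ κ α : Addr, ∃ x, r (κ ++ x) α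

section TypesDense

variable {r s : Addr → Addr → Prop} {α β γ α' β' κ : Addr} {g : Equiv.Perm Cantor}

lemma typesDense_true : TypesDense fun _ _ => True := fun _ _ => ⟨[], trivial⟩

lemma TypesDense.nuclear (hd : TypesDense r) : Nuclear r := by
  refine ⟨Set.univ, ⟨⟨[], trivial⟩, fun _ _ _ _ => trivial, fun _ _ => ⟨trivial, trivial⟩,
    fun α _ β _ => ?_⟩, 1, one_pos, fun _ _ => trivial⟩
  obtain ⟨x, hx⟩ := hd (α ++ [false]) β
  exact ⟨[false] ++ x, List.cons_ne_nil _ _, fun _ _ => trivial, by rwa [← List.append_assoc]⟩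

lemma TypesDense.exists_incomp_pair (hd : TypesDense r) (κ α β : Addr) :
    ∃ x y, r (κ ++ x) α ∧ r (κ ++ y) β ∧ Incomp (κ ++ x) (κ ++ y) := by
  obtain ⟨x, hx⟩ := hd (κ ++ [false]) α
  obtain ⟨y, hy⟩ := hd (κ ++ [true]) β
  refine ⟨[false] ++ x, [true] ++ y, ?_⟩
  simp only [← List.append_assoc]
  exact ⟨hx, hy, (incomp_children κ).append x y⟩

lemma TypesDense.exists_incomp_triple (hd : TypesDense r) (α β γ : Addr) :
    ∃ α' β' γ', (r α' α ∧ r β' β ∧ r γ' γ) ∧ Incomp α' β' ∧ Incomp α' γ' ∧ Incomp β' γ' := by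
  obtain ⟨x, hx⟩ := hd [false] α
  obtain ⟨y, z, hy, hz, h⟩ := hd.exists_incomp_pair [true] β γ
  have hincomp u v : Incomp ([false] ++ u) ([true] ++ v) := (incomp_children []).append u v
  exact ⟨_, _, _, ⟨hx, hy, hz⟩, hincomp x y, hincomp x z, h⟩

/-- A third cone of the type of `α`, free of both cones, is fixed by the swap. -/
lemma rel_of_coneSwap_mem_stabSet (hr : IsTypeSystem r) (hd : TypesDense r) {h : Incomp α β}
    (hroom : HasRoom α β) (hmem : coneSwap h ∈ StabSet r) : r α β := by
  obtain ⟨κ, hκα, hκβ⟩ := hroom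
  obtain ⟨x, hx⟩ := hd κ α
  have hfix := coneSwap_of_incomp h (hκα.append_left x) (hκβ.append_left x)
  exact hr.trans (hr.symm hx)
    ((((mem_stabSet hr).1 hmem).2 _ _ _ _ hfix (coneSwap_left h)).1 hx)

lemma coneSwap_mem_of_actsOn {H : Subgroup (Equiv.Perm Cantor)} (hg : g ∈ H)
    (hα : actsOn g α α') (hβ : actsOn g β β') {h : Incomp α β} {h' : Incomp α' β'}
    (hmem : coneSwap h ∈ H) : coneSwap h' ∈ H := by
  rw [← conj_coneSwap hα hβ h]
  exact H.mul_mem (H.mul_mem hg hmem) (H.inv_mem hg)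

/-- A cone of the type of `αx`, small and away from `αx` and `α'x`, is exchanged with each of them
by `H`. Conjugation by `g` makes its image `s`-equivalent to both `βx` and `β'x`. -/
lemma rel_of_actsOn (hr : IsTypeSystem r) (hd : TypesDense r) (hs : IsTypeSystem s)
    {H : Subgroup (Equiv.Perm Cantor)} (hle : StabSet r ⊆ H)
    (hH : ∀ δ δ' (h : Incomp δ δ'), HasRoom δ δ' → coneSwap h ∈ H → s δ δ')
    (hg : g ∈ H) (hgV : IsPrefixSubst g) (hαα' : r α α') (hα : actsOn g α β)
    (hα' : actsOn g α' β') : s β β' := by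
  obtain ⟨N, hN⟩ := hgV.exists_actsOn 2
  refine hs.of_forall_append (N + 2) fun x hx => ?_
  obtain ⟨κ, hκ, hκ'⟩ : HasRoom (α ++ x) (α' ++ x) :=
    hasRoom_of_two_le_length (by rw [List.length_append]; omega)
      (by rw [List.length_append]; omega)
  obtain ⟨y, hy⟩ := hd (κ ++ List.replicate N false) (α ++ x)
  set γ := κ ++ List.replicate N false ++ y with hγ
  obtain ⟨δ, hδl, hδ⟩ := hN γ (by simp only [hγ, List.length_append, List.length_replicate]; omega)
  have key {η ε : Addr} (hη : r γ η) (hκη : Incomp κ η) (hηε : actsOn g η ε) (hl : N ≤ η.length) :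
      s δ ε := by
    obtain ⟨ε', hε', h⟩ := hN η hl
    obtain rfl := hηε.unique h
    have hγη : Incomp γ η := (hκη.append_left _).append_left y
    exact hH δ ε (hδ.incomp hηε hγη) (hasRoom_of_two_le_length hδl hε')
      (coneSwap_mem_of_actsOn hg hδ hηε (hle (coneSwap_mem_stabSet hr hγη hη)))
  have hβ : s δ (β ++ x) := key hy hκ (hα.append x) (by rw [List.length_append]; omega)
  have hβ' : s δ (β' ++ x) :=
    key (hr.trans hy (hr.append hαα' x)) hκ' (hα'.append x) (by rw [List.length_append]; omega)
  exact hs.trans (hs.symm hβ) hβ'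

lemma rel_of_stabSet_subset (hr : IsTypeSystem r) (hs : IsTypeSystem s) (hdr : TypesDense r)
    (hds : TypesDense s) (h : StabSet r ⊆ StabSet s) (hαβ : r α β) : s α β :=
  rel_of_actsOn hr hdr hs (H := stabSubgroup hs) h
    (fun _ _ _ hroom => rel_of_coneSwap_mem_stabSet hs hds hroom) (stabSubgroup hs).one_mem .one
    hαβ (fun _ => rfl) (fun _ => rfl)

lemma stabSet_ne_vSet (hr : IsTypeSystem r) (hd : TypesDense r) (h : ∃ α β, ¬ r α β) :
    StabSet r ≠ VSet := by
  obtain ⟨α, β, hαβ⟩ := h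
  intro hV
  refine hαβ (rel_of_stabSet_subset isTypeSystem_true hr typesDense_true hd ?_ trivial)
  rw [stabSet_true, hV]

/-- A swap moves a point of a finite invariant set into a cone disjoint from that set. -/
lemma not_forall_stabSet_image_eq (hr : IsTypeSystem r) (hd : TypesDense r) {D : Set Cantor}
    (hfin : D.Finite) (hne : D.Nonempty) : ¬ ∀ g ∈ StabSet r, (fun w => g w) '' D = D := by
  intro hinv
  obtain ⟨p, hp⟩ := hne
  obtain ⟨α, hα, w, rfl⟩ := exists_mem_cone 1 p
  obtain ⟨b, rfl⟩ := List.length_eq_one_iff.1 hα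
  obtain ⟨x, hx⟩ := exists_cone_disjoint hfin [!b]
  obtain ⟨y, hy⟩ := hd ([!b] ++ x) [b]
  have h : Incomp [b] ([!b] ++ x ++ y) := .of_cons_ne (Bool.not_ne_self b).symm _ _
  have himage : coneSwap h (wcat [b] w) ∈ D := by
    rw [← hinv _ (coneSwap_mem_stabSet hr h (hr.symm hy))]
    exact ⟨_, hp, rfl⟩
  rw [coneSwap_left h w] at himage
  exact Set.disjoint_left.1 hx (cone_append_subset _ y (wcat_mem_cone _ w)) himage

end TypesDense

/-! ### Maximality of stabilizers -/

/-- The relation on types induced by an overgroup `H` of the stabilizer of `r`: cones of the types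
of `α` and `β` are exchanged by `H` whenever they are disjoint and leave room for a third one. -/
def SwapRel (r : Addr → Addr → Prop) (H : Subgroup (Equiv.Perm Cantor)) (α β : Addr) : Prop :=
  ∀ α' β', r α' α → r β' β → ∀ h : Incomp α' β', HasRoom α' β' → coneSwap h ∈ H

section Maximality

variable {r : Addr → Addr → Prop} {α β α' β' : Addr} {H : Subgroup (Equiv.Perm Cantor)}

lemma exists_mem_stabSet_actsOn_of_incomp (hr : IsTypeSystem r) (hα : r α α') (hβ : r β β')
    (hαβ : Incomp α β) (hαβ' : Incomp α' β') (hαα' : Incomp α α') (hββ' : Incomp β β')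
    (hα'β : Incomp α' β) : ∃ g ∈ StabSet r, actsOn g α α' ∧ actsOn g β β' :=
  ⟨coneSwap hββ' * coneSwap hαα',
    (stabSubgroup hr).mul_mem (coneSwap_mem_stabSet hr hββ' hβ) (coneSwap_mem_stabSet hr hαα' hα),
    (coneSwap_of_incomp hββ' hα'β hαβ').mul (coneSwap_left hαα'),
    (coneSwap_left hββ').mul (coneSwap_of_incomp hαα' hαβ.symm hα'β.symm)⟩

/-- The pair `(α, β)` is moved to `(α', β')` through two auxiliary pairs of small cones. -/
lemma exists_mem_stabSet_actsOn_pair (hr : IsTypeSystem r) (hd : TypesDense r) (hα : r α α')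
    (hβ : r β β') (h : Incomp α β) (h' : Incomp α' β') (hroom : HasRoom α β)
    (hroom' : HasRoom α' β') : ∃ g ∈ StabSet r, actsOn g α α' ∧ actsOn g β β' := by
  obtain ⟨κ, hκα, hκβ⟩ := hroom
  obtain ⟨κ', hκα', hκβ'⟩ := hroom'
  obtain ⟨u, u', hu⟩ := exists_incomp_append κ κ'
  obtain ⟨x, y, hx, hy, hxy⟩ := hd.exists_incomp_pair (κ ++ u) α β
  obtain ⟨x', y', hx', hy', hxy'⟩ := hd.exists_incomp_pair (κ' ++ u') α' β'
  have sub {δ : Addr} (h : Incomp κ δ) (v : Addr) : Incomp (κ ++ u ++ v) δ :=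
    (h.append_left u).append_left v
  have sub' {δ : Addr} (h : Incomp κ' δ) (v : Addr) : Incomp (κ' ++ u' ++ v) δ :=
    (h.append_left u').append_left v
  obtain ⟨g₁, hg₁, hα₁, hβ₁⟩ := exists_mem_stabSet_actsOn_of_incomp hr (hr.symm hx) (hr.symm hy)
    h hxy (sub hκα x).symm (sub hκβ y).symm (sub hκβ x)
  obtain ⟨g₂, hg₂, hα₂, hβ₂⟩ := exists_mem_stabSet_actsOn_of_incomp hr
    (hr.trans (hr.trans hx hα) (hr.symm hx')) (hr.trans (hr.trans hy hβ) (hr.symm hy'))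
    hxy hxy' (hu.append x x') (hu.append y y') (hu.append y x').symm
  obtain ⟨g₃, hg₃, hα₃, hβ₃⟩ := exists_mem_stabSet_actsOn_of_incomp hr hx' hy'
    hxy' h' (sub' hκα' x') (sub' hκβ' y') (sub' hκα' y').symm
  exact ⟨g₃ * (g₂ * g₁), (stabSubgroup hr).mul_mem hg₃ ((stabSubgroup hr).mul_mem hg₂ hg₁),
    hα₃.mul (hα₂.mul hα₁), hβ₃.mul (hβ₂.mul hβ₁)⟩

lemma swapRel_of_coneSwap_mem (hr : IsTypeSystem r) (hd : TypesDense r) (hle : StabSet r ⊆ H)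
    (hα : r α' α) (hβ : r β' β) (h : Incomp α' β') (hroom : HasRoom α' β')
    (hmem : coneSwap h ∈ H) : SwapRel r H α β := by
  intro α'' β'' hα'' hβ'' h'' hroom''
  obtain ⟨g, hg, hgα, hgβ⟩ := exists_mem_stabSet_actsOn_pair hr hd
    (hr.trans hα (hr.symm hα'')) (hr.trans hβ (hr.symm hβ'')) h h'' hroom hroom''
  exact coneSwap_mem_of_actsOn (hle hg) hgα hgβ hmem

lemma swapRel_of_rel (hr : IsTypeSystem r) (hle : StabSet r ⊆ H) (h : r α β) :
    SwapRel r H α β := fun _ _ hα hβ h' _ =>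
  hle (coneSwap_mem_stabSet hr h' (hr.trans hα (hr.trans h (hr.symm hβ))))

lemma SwapRel.symm (h : SwapRel r H α β) : SwapRel r H β α := fun _ _ hβ hα h' hroom => by
  rw [← coneSwap_comm]
  exact h _ _ hα hβ h'.symm hroom.symm

lemma SwapRel.trans {γ : Addr} (hr : IsTypeSystem r) (hd : TypesDense r) (hle : StabSet r ⊆ H)
    (hαβ : SwapRel r H α β) (hβγ : SwapRel r H β γ) : SwapRel r H α γ := by
  obtain ⟨α', β', γ', ⟨hα, hβ, hγ⟩, h₁₂, h₁₃, h₂₃⟩ := hd.exists_incomp_triple α β γ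
  have hmem₁₂ := hαβ α' β' hα hβ h₁₂ ⟨γ', h₁₃.symm, h₂₃.symm⟩
  have hmem₂₃ := hβγ β' γ' hβ hγ h₂₃ ⟨α', h₁₂, h₁₃⟩
  exact swapRel_of_coneSwap_mem hr hd hle hα hγ h₁₃ ⟨β', h₁₂.symm, h₂₃⟩
    (coneSwap_mem_of_actsOn hmem₂₃ (coneSwap_of_incomp h₂₃ h₁₂ h₁₃) (coneSwap_left h₂₃) hmem₁₂)

lemma SwapRel.append (hr : IsTypeSystem r) (hd : TypesDense r) (hle : StabSet r ⊆ H)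
    (h : SwapRel r H α β) (x : Addr) : SwapRel r H (α ++ x) (β ++ x) := by
  obtain ⟨α', β', γ', ⟨hα, hβ, hγ⟩, h₁₂, h₁₃, h₂₃⟩ := hd.exists_incomp_triple α β α
  have hmem₁₂ := h α' β' hα hβ h₁₂ ⟨γ', h₁₃.symm, h₂₃.symm⟩
  have hmem₁₃ : coneSwap (h₁₃.append x x) ∈ H :=
    hle (coneSwap_mem_stabSet hr _ (hr.append (hr.trans hα (hr.symm hγ)) x))
  have hfix := coneSwap_of_incomp h₁₂ h₁₃.symm h₂₃.symm
  have hmem₂₃ : coneSwap (h₂₃.append x x) ∈ H :=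
    coneSwap_mem_of_actsOn hmem₁₂ ((coneSwap_left h₁₂).append x) (hfix.append x) hmem₁₃
  exact (swapRel_of_coneSwap_mem hr hd hle (hr.append hβ x) (hr.append hγ x) (h₂₃.append x x)
    ⟨α', h₁₂.append_right x, h₁₃.append_right x⟩ hmem₂₃).symm

lemma SwapRel.of_children (hr : IsTypeSystem r)
    (h₀ : SwapRel r H (α ++ [false]) (β ++ [false]))
    (h₁ : SwapRel r H (α ++ [true]) (β ++ [true])) : SwapRel r H α β := by
  intro α' β' hα hβ h hroom
  rw [coneSwap_eq_mul]
  exact H.mul_mem (h₀ _ _ (hr.append hα _) (hr.append hβ _) _ (hroom.append _ _))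
    (h₁ _ _ (hr.append hα _) (hr.append hβ _) _ (hroom.append _ _))

lemma isTypeSystem_swapRel (hr : IsTypeSystem r) (hd : TypesDense r) (hle : StabSet r ⊆ H) :
    IsTypeSystem (SwapRel r H) :=
  ⟨⟨fun α => swapRel_of_rel hr hle (hr.refl α), .symm, .trans hr hd hle⟩,
    fun _ _ h => ⟨h.append hr hd hle _, h.append hr hd hle _⟩, fun _ _ => .of_children hr⟩

lemma subset_stabSet_of_swapRel_le (hr : IsTypeSystem r) (hd : TypesDense r)
    (hle : StabSet r ⊆ H) (hV : (H : Set (Equiv.Perm Cantor)) ⊆ VSet)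
    (h : ∀ α β, SwapRel r H α β → r α β) : (H : Set (Equiv.Perm Cantor)) ⊆ StabSet r := by
  have hswap δ δ' (hi : Incomp δ δ') (hroom : HasRoom δ δ') (hmem : coneSwap hi ∈ H) : r δ δ' :=
    h δ δ' (swapRel_of_coneSwap_mem hr hd hle (hr.refl δ) (hr.refl δ') hi hroom hmem)
  intro g hg
  have hg' : g⁻¹ ∈ H := H.inv_mem hg
  exact (mem_stabSet hr).2 ⟨hV hg, fun α α' β β' hα hα' =>
    ⟨fun e => rel_of_actsOn hr hd hr hle hswap hg (hV hg) e hα hα',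
      fun e => rel_of_actsOn hr hd hr hle hswap hg' (hV hg') e hα.inv hα'.inv⟩⟩

lemma vSet_subset_of_forall_swapRel (hr : IsTypeSystem r) (h : ∀ α β, SwapRel r H α β) :
    VSet ⊆ (H : Set (Equiv.Perm Cantor)) := fun _ hg =>
  IsPrefixSubst.mem_of_forall_coneSwap_mem hg fun α β hαβ => by
    rw [coneSwap_eq_mul]
    exact H.mul_mem (h _ _ _ _ (hr.refl _) (hr.refl _) _ (hαβ.hasRoom_children false))
      (h _ _ _ _ (hr.refl _) (hr.refl _) _ (hαβ.hasRoom_children true))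

lemma isSubgroupSet_coe (K : Subgroup (Equiv.Perm Cantor)) :
    IsSubgroupSet (K : Set (Equiv.Perm Cantor)) :=
  ⟨K.one_mem, fun _ hg _ hh => K.mul_mem hg hh, fun _ hg => K.inv_mem hg⟩

lemma IsSubgroupSet.exists_subgroup {M : Set (Equiv.Perm Cantor)} (hM : IsSubgroupSet M) :
    ∃ K : Subgroup (Equiv.Perm Cantor), (K : Set (Equiv.Perm Cantor)) = M :=
  ⟨{ carrier := M, one_mem' := hM.1, mul_mem' := fun {g h} hg hh => hM.2.1 g hg h hh,
     inv_mem' := fun {g} hg => hM.2.2 g hg }, rfl⟩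

theorem SimpleTS.isMaximalSubgroupOfV_stabSet (hs : SimpleTS r) (hd : TypesDense r) :
    IsMaximalSubgroupOfV (StabSet r) := by
  obtain ⟨hr, hne, hquot⟩ := hs
  refine ⟨isSubgroupSet_coe (stabSubgroup hr), fun g hg => hg.1, stabSet_ne_vSet hr hd hne,
    fun M hM hle hV => ?_⟩
  obtain ⟨H, rfl⟩ := hM.exists_subgroup
  rcases hquot (SwapRel r H) ⟨isTypeSystem_swapRel hr hd hle, fun _ _ => swapRel_of_rel hr hle⟩
    with h | h
  · exact .inl ((subset_stabSet_of_swapRel_le hr hd hle hV fun α β => (h α β).1).antisymm hle)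
  · exact .inr (hV.antisymm (vSet_subset_of_forall_swapRel hr h))

end Maximality

/-! ### Sequences that are not eventually periodic -/

/-- From some index on, the sequence `f` is periodic: shifting it by `i` or by a later index `j`
has the same effect. -/
def EventuallyPeriodic {X : Type*} (f : ℕ → X) : Prop := ∃ i j, i < j ∧ ∀ k, f (i + k) = f (j + k)

lemma countable_setOf_eventuallyPeriodic {X : Type*} [Countable X] :
    {f : ℕ → X | EventuallyPeriodic f}.Countable := by
  simp only [EventuallyPeriodic, Set.ofPred_exists]
  refine Set.countable_iUnion fun i => Set.countable_iUnion fun j => ?_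
  -- Once `i` and `j` are known, the values below `j` determine the sequence.
  refine (Set.mapsTo_univ (fun f (t : Fin j) => f t) _).countable_of_injOn ?_ (Set.to_countable _)
  rintro f ⟨hij, hf⟩ g ⟨-, hg⟩ hfg
  funext n
  induction n using Nat.strong_induction_on with
  | _ n ih =>
    rcases lt_or_ge n j with hn | hn
    · exact congrFun hfg ⟨n, hn⟩
    · obtain ⟨k, rfl⟩ := Nat.exists_eq_add_of_le hn
      rw [← hf k, ← hg k]
      exact ih _ (by omega)

lemma not_countable_setOf_not_eventuallyPeriodic :
    ¬ {f : ℕ → Bool | ¬ EventuallyPeriodic f}.Countable := fun h => by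
  have huniv := h.union countable_setOf_eventuallyPeriodic
  rw [← Set.compl_ofPred, Set.compl_union_self, Set.countable_univ_iff] at huniv
  have hle : Cardinal.mk (ℕ → Bool) ≤ Cardinal.aleph0 := Cardinal.mk_le_aleph0_iff.2 huniv
  rw [← Cardinal.power_def, Cardinal.mk_bool, Cardinal.mk_nat] at hle
  exact (Cardinal.cantor _).not_ge hle

/-! ### The type system of a binary sequence -/

/-- The index of a child of a cone of type `x_n`, in the type system with types `x_0, x_1, …` where
the left child of `x_n` is `x_{n+1}` and the right child is `x_0` or `x_1`, as told by `f n`. -/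
def seqStep (f : ℕ → Bool) (n : ℕ) : Bool → ℕ
  | false => n + 1
  | true => (f n).toNat

/-- The index of the type of an address, the root having type `x_0`. -/
def seqState (f : ℕ → Bool) (α : Addr) : ℕ := α.foldl (seqStep f) 0

/-- The type system associated with the binary sequence `f`. -/
def seqRel (f : ℕ → Bool) (α β : Addr) : Prop := seqState f α = seqState f β

section SeqRel

variable {f g : ℕ → Bool} {s : Addr → Addr → Prop} {α β : Addr}

lemma seqState_append_false (f : ℕ → Bool) (α : Addr) :
    seqState f (α ++ [false]) = seqState f α + 1 := by
  simp [seqState, seqStep]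

lemma seqState_append_true (f : ℕ → Bool) (α : Addr) :
    seqState f (α ++ [true]) = (f (seqState f α)).toNat := by
  simp [seqState, seqStep]

lemma seqState_append_replicate (f : ℕ → Bool) (α : Addr) (k : ℕ) :
    seqState f (α ++ List.replicate k false) = seqState f α + k := by
  induction k with
  | zero => simp
  | succ k ih =>
    rw [List.replicate_succ', ← List.append_assoc, seqState_append_false, ih, add_assoc]

lemma seqState_replicate (f : ℕ → Bool) (k : ℕ) : seqState f (List.replicate k false) = k :=
  (seqState_append_replicate f [] k).trans (zero_add k)

lemma isTypeSystem_seqRel (f : ℕ → Bool) : IsTypeSystem (seqRel f) := by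
  refine ⟨⟨fun _ => rfl, Eq.symm, Eq.trans⟩, fun α β h => ?_, fun α β h _ => ?_⟩
  · simp only [seqRel, seqState_append_false, seqState_append_true]
    rw [h]
    exact ⟨rfl, rfl⟩
  · simpa only [seqRel, seqState_append_false, add_left_inj] using h

lemma seqRel_append_replicate_append_true (f : ℕ → Bool) (α : Addr) (k : ℕ) :
    seqRel f (α ++ List.replicate k false ++ [true])
      (List.replicate (f (seqState f α + k)).toNat false) := by
  rw [seqRel, seqState_append_true, seqState_append_replicate, seqState_replicate]

lemma exists_eq_false_of_not_eventuallyPeriodic (hf : ¬ EventuallyPeriodic f) (n : ℕ) :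
    ∃ m, f (n + m) = false := by
  by_contra! h
  refine hf ⟨n, n + 1, n.lt_succ_self, fun k => ?_⟩
  rw [add_assoc, Bool.eq_true_of_not_eq_false (h k), Bool.eq_true_of_not_eq_false (h (1 + k))]

/-- Descend to some `x_n` with `f n = false`, then to `x_0`, then to the wanted type. -/
lemma typesDense_seqRel (hf : ¬ EventuallyPeriodic f) : TypesDense (seqRel f) := by
  intro κ α
  obtain ⟨m, hm⟩ := exists_eq_false_of_not_eventuallyPeriodic hf (seqState f κ)
  refine ⟨List.replicate m false ++ [true] ++ List.replicate (seqState f α) false, ?_⟩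
  have h := seqRel_append_replicate_append_true f κ m
  rw [seqRel, hm] at h
  rw [seqRel, ← List.append_assoc, ← List.append_assoc, seqState_append_replicate, h]
  exact Nat.zero_add _

/-- If `s` identifies `x_i` with `x_j`, a discrepancy `f (i + k) ≠ f (j + k)` makes it identify the
right children of `x_{i+k}` and `x_{j+k}`, which are `x_0` and `x_1`. -/
lemma IsQuotientOf.rel_nil_singleton (hs : IsQuotientOf s (seqRel f))
    (hf : ¬ EventuallyPeriodic f) (h : s α β) (hne : ¬ seqRel f α β) : s [] [false] := by
  wlog hlt : seqState f α < seqState f β generalizing α β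
  · exact this (hs.1.symm h) (Ne.symm hne) (lt_of_le_of_ne (not_lt.1 hlt) (Ne.symm hne))
  obtain ⟨k, hk⟩ : ∃ k, f (seqState f α + k) ≠ f (seqState f β + k) := by
    by_contra! h'
    exact hf ⟨_, _, hlt, h'⟩
  have hright : s (List.replicate (f (seqState f α + k)).toNat false)
      (List.replicate (f (seqState f β + k)).toNat false) := by
    have hdesc := hs.1.append h (List.replicate k false ++ [true])
    rw [← List.append_assoc, ← List.append_assoc] at hdesc
    exact hs.1.trans (hs.1.symm (hs.2 _ _ (seqRel_append_replicate_append_true f α k)))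
      (hs.1.trans hdesc (hs.2 _ _ (seqRel_append_replicate_append_true f β k)))
  cases hα : f (seqState f α + k) <;> cases hβ : f (seqState f β + k) <;> rw [hα, hβ] at hright
  · exact absurd (hα.trans hβ.symm) hk
  · exact hright
  · exact hs.1.symm hright
  · exact absurd (hα.trans hβ.symm) hk

lemma IsQuotientOf.rel_of_rel_nil_singleton (hs : IsQuotientOf s (seqRel f)) (h : s [] [false])
    (α β : Addr) : s α β := by
  have hreplicate (k : ℕ) : s [] (List.replicate k false) := by
    induction k with
    | zero => exact hs.1.refl _
    | succ k ih => exact hs.1.trans ih (hs.1.append h (List.replicate k false))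
  have hnil (γ : Addr) : s [] γ :=
    hs.1.trans (hreplicate (seqState f γ)) (hs.2 _ _ (seqState_replicate f _))
  exact hs.1.trans (hs.1.symm (hnil α)) (hnil β)

lemma simpleTS_seqRel (hf : ¬ EventuallyPeriodic f) : SimpleTS (seqRel f) := by
  refine ⟨isTypeSystem_seqRel f, ⟨[], [false], Nat.zero_ne_one⟩, fun s hs => ?_⟩
  by_cases h : ∃ α β, s α β ∧ ¬ seqRel f α β
  · obtain ⟨α, β, hαβ, hne⟩ := h
    exact .inr (hs.rel_of_rel_nil_singleton (hs.rel_nil_singleton hf hαβ hne))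
  · push Not at h
    exact .inl fun α β => ⟨h α β, hs.2 α β⟩

lemma eq_of_forall_seqRel_imp (h : ∀ α β, seqRel f α β → seqRel g α β) : f = g := by
  funext n
  have hdescent (f : ℕ → Bool) :
      seqRel f (List.replicate n false ++ [true]) (List.replicate (f n).toNat false) := by
    rw [seqRel, seqState_append_true, seqState_replicate, seqState_replicate]
  have hfg := (h _ _ (hdescent f)).symm.trans (hdescent g)
  rw [seqState_replicate, seqState_replicate] at hfg
  rw [Bool.eq_iff_iff, ← Bool.toNat_eq_one, hfg, Bool.toNat_eq_one]

end SeqRel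

/-- **Statement 17.**  There are uncountably many maximal subgroups of Thompson's
group `V` arising as stabilizers of simple nuclear type systems, none of which
stabilizes setwise a nonempty finite subset of Cantor space. -/
theorem uncountably_many_maximal_subgroups :
    ∃ 𝓜 : Set (Set (Equiv.Perm Cantor)),
      ¬ 𝓜.Countable ∧
      ∀ M ∈ 𝓜,
        (∃ r : Addr → Addr → Prop, SimpleTS r ∧ Nuclear r ∧ M = StabSet r) ∧
        IsMaximalSubgroupOfV M ∧
        ∀ D : Set Cantor, D.Finite → D.Nonempty →
          ¬ ∀ g ∈ M, (fun w => g w) '' D = D := by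
  refine ⟨(fun f => StabSet (seqRel f)) '' {f | ¬ EventuallyPeriodic f}, fun hc => ?_, ?_⟩
  · refine not_countable_setOf_not_eventuallyPeriodic
      (Set.countable_of_injective_of_countable_image (fun f hf g hg h => ?_) hc)
    exact eq_of_forall_seqRel_imp fun α β => rel_of_stabSet_subset (isTypeSystem_seqRel f)
      (isTypeSystem_seqRel g) (typesDense_seqRel hf) (typesDense_seqRel hg) h.le
  · rintro _ ⟨f, hf, rfl⟩
    have hs := simpleTS_seqRel hf
    have hd := typesDense_seqRel hf
    exact ⟨⟨seqRel f, hs, hd.nuclear, rfl⟩, hs.isMaximalSubgroupOfV_stabSet hd,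
      fun D hfin hne => not_forall_stabSet_image_eq (isTypeSystem_seqRel f) hd hfin hne⟩
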